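/- (Abstract information–disturbance counting bound.) Let N ≥ 1 and b, e be finite dimensions, and let Θ be a density matrix on ℂ^({0,1}^N) ⊗ ℂ^b ⊗ ℂ^e. Let T, S be finite sets; for each t ∈ T let 𝓔_t ⊆ {0,1}^N, pairwise disjoint over t, with orthogonal projections (E^t_z)_{z∈𝓔_t} on ℂ^b, mutually orthogonal within each t; for each s ∈ S let 𝓕_s ⊆ {0,1}^N, pairwise disjoint over s, with orthogonal projections (F^s_x)_{x∈𝓕_s} on ℂ^e, mutually orthogonal within each s. Assume tr(Θ (Z_z ⊗ E^t_z ⊗ I_e)) = 2^(−N) for every t ∈ T and z ∈ 𝓔_t, and tr(Θ (X_x ⊗ I_b ⊗ F^s_x)) = 2^(−N) for every s ∈ S and x ∈ 𝓕_s. Then Σ_{t∈T} |𝓔_t| + Σ_{s∈S} |𝓕_s| ≤ 2^N (1 + (2 |T| |S| 2^(−N))^{1/2}). -/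

import Mathlib

/-!
Put `φ(M) = Re tr (Θ M)`, a positive normalized functional, `P_t = ∑_z Z_z ⊗ E^t_z ⊗ I` and
`Q_s = ∑_x X_x ⊗ I ⊗ F^s_x`. By disjointness of the index sets and orthogonality of each of the
two bases, the `P_t` are pairwise orthogonal projections, and so are the `Q_s`; hence
`P = ∑ P_t` and `Q = ∑ Q_s` are projections, with `φ(P) = 2^(−N) ∑ |𝓔_t|` and
`φ(Q) = 2^(−N) ∑ |𝓕_s|` by the decoding hypotheses.

The bases are mutually unbiased, so `Q_s P_t Q_s = 2^(−N) ∑_x X_x ⊗ (∑_z E^t_z) ⊗ F^s_x`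
(`sandwich`), which is at most `2^(−N) Q_s` because `∑_z E^t_z` is a projection. By
Cauchy–Schwarz over `s` (`state_sum_sq_le`) and summation over `t`, this gives
`φ(Q P Q) ≤ c² φ(Q)` with `c² = |T| |S| 2^(−N)`. For projections such a bound forces
`φ(P) + φ(Q) ≤ 1 + c` (`state_add_le`), an uncertainty relation proved by exhibiting squares.
Multiplying by `2^N` gives the claim, even without the factor `2` under the root.
-/


open Matrix
open scoped Kronecker ComplexOrder

noncomputable section

/-- Standard basis vector `e_z` of `ℂ^({0,1}^N)`. -/
def ketVec (N : ℕ) (z : Fin N → Bool) : (Fin N → Bool) → ℂ := fun w =>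
  if w = z then 1 else 0

/-- Hadamard basis vector `x̄(w) = 2^(−N/2)·(−1)^(x·w)`. -/
def hadVec (N : ℕ) (x : Fin N → Bool) : (Fin N → Bool) → ℂ := fun w =>
  ((-1 : ℂ) ^ (Finset.univ.filter fun i => x i && w i).card) / ((Real.sqrt 2 ^ N : ℝ) : ℂ)

/-- Outer product `v v^*`. -/
def outer {ι : Type*} (v : ι → ℂ) : Matrix ι ι ℂ :=
  Matrix.vecMulVec v (fun j => (starRingEnd ℂ) (v j))

/-- `Z_z = e_z e_z^*`. -/
def Zproj (N : ℕ) (z : Fin N → Bool) : Matrix (Fin N → Bool) (Fin N → Bool) ℂ :=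
  outer (ketVec N z)

/-- `X_x = x̄ x̄^*`. -/
def Xproj (N : ℕ) (x : Fin N → Bool) : Matrix (Fin N → Bool) (Fin N → Bool) ℂ :=
  outer (hadVec N x)

/-! ### Projections and positive functionals on a real star-algebra -/

/-- A finite sum of pairwise orthogonal projections is a projection. -/
theorem isStarProjection_sum {A ι : Type*} [Ring A] [StarRing A] (s : Finset ι) (f : ι → A)
    (hf : ∀ i ∈ s, IsStarProjection (f i))
    (ho : ∀ i ∈ s, ∀ j ∈ s, i ≠ j → f i * f j = 0) : IsStarProjection (∑ i ∈ s, f i) := by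
  classical
  refine ⟨?_, ?_⟩
  · change (∑ i ∈ s, f i) * (∑ i ∈ s, f i) = ∑ i ∈ s, f i
    rw [Finset.sum_mul]
    refine Finset.sum_congr rfl fun i hi => ?_
    rw [Finset.mul_sum, Finset.sum_eq_single_of_mem i hi]
    · exact (hf i hi).isIdempotentElem
    · exact fun j hj hne => ho i hi j hj hne.symm
  · change star (∑ i ∈ s, f i) = _
    rw [star_sum]
    exact Finset.sum_congr rfl fun i hi => (hf i hi).isSelfAdjoint

section State

variable {A : Type*} [Ring A] [StarRing A] [Algebra ℝ A]

/-- If two projections satisfy `φ (Q P Q) ≤ c² φ Q` in a state `φ`, then `φ P + φ Q ≤ 1 + c`.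
With `M = P + Q` and `k = 1 + c`, it is the positivity of `φ` on the two squares
`(c P - P Q)^* (c P - P Q)` and `(k - M)^2`. -/
theorem state_add_le [StarModule ℝ A] (φ : A →ₗ[ℝ] ℝ) (hφ : ∀ Y, 0 ≤ φ (star Y * Y)) (h1 : φ 1 = 1)
    {P Q : A} (hP : IsStarProjection P) (hQ : IsStarProjection Q) {c : ℝ} (hc : 0 < c)
    (h : φ (Q * P * Q) ≤ c ^ 2 * φ Q) : φ P + φ Q ≤ 1 + c := by
  have hPP : P * P = P := hP.isIdempotentElem
  have hQQ : Q * Q = Q := hQ.isIdempotentElem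
  have hPs : star P = P := hP.isSelfAdjoint
  have hQs : star Q = Q := hQ.isSelfAdjoint
  have e1 : star (c • P - P * Q) * (c • P - P * Q)
      = (c ^ 2) • P - c • (P * Q) - c • (Q * P) + Q * P * Q := by
    have a1 : Q * P * P = Q * P := by rw [mul_assoc, hPP]
    have a2 : P * (P * Q) = P * Q := by rw [← mul_assoc, hPP]
    have a3 : Q * P * (P * Q) = Q * P * Q := by rw [← mul_assoc, a1]
    simp only [star_sub, star_smul, star_mul, hPs, hQs, star_trivial, sub_mul, mul_sub,
      smul_mul_assoc, mul_smul_comm, a1, a2, a3, hPP, smul_sub, smul_smul]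
    rw [pow_two]
    abel
  have e2 : star ((1 + c) • (1 : A) - P - Q) * ((1 + c) • (1 : A) - P - Q)
      = ((1 + c) ^ 2) • (1 : A) - (2 * (1 + c)) • (P + Q) + (P + Q) + P * Q + Q * P := by
    simp only [star_sub, star_smul, star_one, hPs, hQs, star_trivial, sub_mul, mul_sub,
      smul_mul_assoc, mul_smul_comm, one_mul, mul_one, hPP, hQQ]
    module
  have p1 := hφ (c • P - P * Q)
  have p2 := hφ ((1 + c) • (1 : A) - P - Q)
  rw [e1] at p1
  rw [e2] at p2
  simp only [map_add, map_sub, map_smul, smul_eq_mul, h1] at p1 p2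
  have p3 : φ (P * Q) + φ (Q * P) ≤ c * (φ P + φ Q) := by
    refine le_of_mul_le_mul_left ?_ hc
    nlinarith
  have hk : 0 < 1 + c := by linarith
  refine le_of_mul_le_mul_left ?_ hk
  nlinarith

/-- Cauchy–Schwarz for a sum of `|S|` elements in the seminorm of a positive functional. -/
theorem state_sum_sq_le {S : Type*} [Fintype S] (φ : A →ₗ[ℝ] ℝ)
    (hφ : ∀ Y, 0 ≤ φ (star Y * Y)) (Y : S → A) :
    φ (star (∑ s, Y s) * ∑ s, Y s) ≤ Fintype.card S * ∑ s, φ (star (Y s) * Y s) := by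
  have h : 0 ≤ ∑ s, ∑ s', φ (star (Y s - Y s') * (Y s - Y s')) :=
    Finset.sum_nonneg fun s _ => Finset.sum_nonneg fun s' _ => hφ _
  have e : ∑ s, ∑ s', φ (star (Y s - Y s') * (Y s - Y s'))
      = 2 * (Fintype.card S * ∑ s, φ (star (Y s) * Y s))
        - 2 * φ (star (∑ s, Y s) * ∑ s, Y s) := by
    have e3 : φ (star (∑ s, Y s) * ∑ s, Y s) = ∑ s, ∑ s', φ (star (Y s) * Y s') := by
      simp only [star_sum, Finset.sum_mul, Finset.mul_sum, map_sum]
      exact Finset.sum_comm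
    have e4 : ∑ s, ∑ s', φ (star (Y s') * Y s) = ∑ s, ∑ s', φ (star (Y s) * Y s') :=
      Finset.sum_comm
    simp only [star_sub, sub_mul, mul_sub, map_sub, Finset.sum_sub_distrib, e4, e3,
      Finset.sum_const, Finset.card_univ, nsmul_eq_mul, ← Finset.mul_sum]
    ring
  linarith

/-- Counting form of the uncertainty bound: if the projections `P t` are pairwise orthogonal, the
`Q s` are pairwise orthogonal, and `φ (Q s * P t * Q s) ≤ d φ (Q s)` for each pair, then the total
weights add up to at most `1 + √(|T| |S| d)`. -/
theorem state_sum_add_sum_le [StarModule ℝ A] {T S : Type*} [Fintype T] [Fintype S] (φ : A →ₗ[ℝ] ℝ)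
    (hφ : ∀ Y, 0 ≤ φ (star Y * Y)) (h1 : φ 1 = 1) (P : T → A) (Q : S → A)
    (hP : ∀ t, IsStarProjection (P t)) (hQ : ∀ s, IsStarProjection (Q s))
    (hPo : ∀ t t', t ≠ t' → P t * P t' = 0) (hQo : ∀ s s', s ≠ s' → Q s * Q s' = 0)
    {d : ℝ} (hd : 0 ≤ d) (h : ∀ t s, φ (Q s * P t * Q s) ≤ d * φ (Q s)) :
    ∑ t, φ (P t) + ∑ s, φ (Q s) ≤ 1 + Real.sqrt (Fintype.card T * Fintype.card S * d) := by
  have hPs := isStarProjection_sum Finset.univ P (fun t _ => hP t) fun t _ t' _ => hPo t t'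
  have hQs := isStarProjection_sum Finset.univ Q (fun t _ => hQ t) fun t _ t' _ => hQo t t'
  have key : φ ((∑ s, Q s) * (∑ t, P t) * ∑ s, Q s)
      ≤ (Fintype.card T * Fintype.card S * d) * φ (∑ s, Q s) := by
    have step : ∀ t, φ ((∑ s, Q s) * P t * ∑ s, Q s)
        ≤ Fintype.card S * (d * φ (∑ s, Q s)) := by
      intro t
      have hsq : ∀ R : A, IsStarProjection R → star (P t * R) * (P t * R) = R * P t * R := by
        intro R hR
        have hPP : P t * P t = P t := (hP t).isIdempotentElem
        have hPs : star (P t) = P t := (hP t).isSelfAdjoint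
        have hRs : star R = R := hR.isSelfAdjoint
        rw [star_mul, hPs, hRs, mul_assoc, ← mul_assoc (P t), hPP, mul_assoc]
      have hcs := state_sum_sq_le φ hφ fun s => P t * Q s
      rw [← Finset.mul_sum, hsq _ hQs] at hcs
      refine hcs.trans (mul_le_mul_of_nonneg_left ?_ (Nat.cast_nonneg _))
      rw [map_sum, Finset.mul_sum]
      refine Finset.sum_le_sum fun s _ => ?_
      rw [hsq _ (hQ s)]
      exact h t s
    rw [Finset.mul_sum Finset.univ P, Finset.sum_mul, map_sum]
    refine (Finset.sum_le_sum fun t _ => step t).trans (le_of_eq ?_)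
    rw [Finset.sum_const, Finset.card_univ, nsmul_eq_mul]
    ring
  have hq : 0 ≤ φ (∑ s, Q s) := by
    have := hφ (∑ s, Q s)
    rwa [show star (∑ s, Q s) = ∑ s, Q s from hQs.isSelfAdjoint,
      show (∑ s, Q s) * (∑ s, Q s) = ∑ s, Q s from hQs.isIdempotentElem] at this
  rw [← map_sum, ← map_sum]
  -- `state_add_le` needs a positive constant, so `√(|T| |S| d)`, which may be `0`, is
  -- approximated from above.
  refine le_of_forall_pos_le_add fun ε hε => ?_
  have hr := Real.sqrt_nonneg (Fintype.card T * Fintype.card S * d)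
  have hr2 := Real.sq_sqrt (show (0 : ℝ) ≤ Fintype.card T * Fintype.card S * d by positivity)
  rw [add_assoc]
  refine state_add_le φ hφ h1 hPs hQs (by positivity) (key.trans ?_)
  refine mul_le_mul_of_nonneg_right ?_ hq
  nlinarith

end State

/-! ### The computational and Hadamard bases, and the sandwiched projections -/

section Concrete

theorem outer_mul_outer {ι : Type*} [Fintype ι] (v w : ι → ℂ) :
    outer v * outer w = (∑ i, (starRingEnd ℂ) (v i) * w i) •
      Matrix.vecMulVec v (fun j => (starRingEnd ℂ) (w j)) := by
  ext i j
  simp only [outer, Matrix.mul_apply, Matrix.vecMulVec_apply, Matrix.smul_apply, smul_eq_mul,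
    Finset.sum_mul]
  exact Finset.sum_congr rfl fun k _ => by ring

theorem isStarProjection_outer {ι : Type*} [Fintype ι] (v : ι → ℂ)
    (hv : ∑ i, (starRingEnd ℂ) (v i) * v i = 1) : IsStarProjection (outer v) := by
  refine ⟨?_, ?_⟩
  · change outer v * outer v = outer v
    rw [outer_mul_outer, hv, one_smul]
    rfl
  · change (outer v)ᴴ = outer v
    ext i j
    simp [outer, Matrix.vecMulVec_apply, mul_comm]

theorem ketVec_inner (N : ℕ) (z : Fin N → Bool) (v : (Fin N → Bool) → ℂ) :
    ∑ i, (starRingEnd ℂ) (ketVec N z i) * v i = v z := by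
  simp [ketVec]

/-- The character `w ↦ (-1)^(x·w)` as a product over coordinates. -/
theorem neg_one_pow_card (N : ℕ) (x w : Fin N → Bool) :
    (-1 : ℂ) ^ (Finset.univ.filter fun i => x i && w i).card
      = ∏ i, if x i && w i then (-1 : ℂ) else 1 := by
  rw [Finset.prod_ite]
  simp

theorem sqrt_two_pow_mul_self (N : ℕ) :
    ((Real.sqrt 2 ^ N : ℝ) : ℂ) * ((Real.sqrt 2 ^ N : ℝ) : ℂ) = 2 ^ N := by
  rw [← Complex.ofReal_mul, ← mul_pow, Real.mul_self_sqrt (by norm_num)]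
  simp

/-- Orthonormality of the Hadamard basis: the sum over `w` of the product of two characters
factors over the coordinates. -/
theorem hadVec_inner (N : ℕ) (x y : Fin N → Bool) :
    ∑ w, (starRingEnd ℂ) (hadVec N x w) * hadVec N y w = if x = y then 1 else 0 := by
  have h1 : ∀ w, (starRingEnd ℂ) (hadVec N x w) * hadVec N y w
      = (∏ i, (if x i && w i then (-1 : ℂ) else 1) * (if y i && w i then (-1 : ℂ) else 1))
        / 2 ^ N := by
    intro w
    rw [Finset.prod_mul_distrib, ← neg_one_pow_card, ← neg_one_pow_card,
      ← sqrt_two_pow_mul_self, hadVec, hadVec, map_div₀, Complex.conj_ofReal, map_pow,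
      map_neg, map_one, div_mul_div_comm]
  simp only [h1]
  rw [← Finset.sum_div, ← Fintype.piFinset_univ, ← Finset.prod_univ_sum
    (f := fun i (a : Bool) => (if x i && a then (-1 : ℂ) else 1) *
      (if y i && a then (-1 : ℂ) else 1))]
  split_ifs with h
  · subst h
    have : ∀ i, (∑ a : Bool, (if x i && a then (-1 : ℂ) else 1) *
        (if x i && a then (-1 : ℂ) else 1)) = 2 := by
      intro i
      cases x i <;> norm_num
    simp only [this]
    simp
  · obtain ⟨i, hi⟩ := Function.ne_iff.mp h
    rw [Finset.prod_eq_zero (Finset.mem_univ i), zero_div]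
    revert hi
    cases x i <;> cases y i <;> simp

theorem Zproj_isStarProjection (N : ℕ) (z : Fin N → Bool) : IsStarProjection (Zproj N z) :=
  isStarProjection_outer _ (by rw [ketVec_inner]; simp [ketVec])

theorem Xproj_isStarProjection (N : ℕ) (x : Fin N → Bool) : IsStarProjection (Xproj N x) :=
  isStarProjection_outer _ (by rw [hadVec_inner, if_pos rfl])

theorem Zproj_mul_of_ne (N : ℕ) {z z' : Fin N → Bool} (h : z ≠ z') :
    Zproj N z * Zproj N z' = 0 := by
  rw [Zproj, Zproj, outer_mul_outer, ketVec_inner]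
  simp [ketVec, h]

theorem Xproj_mul_of_ne (N : ℕ) {x x' : Fin N → Bool} (h : x ≠ x') :
    Xproj N x * Xproj N x' = 0 := by
  rw [Xproj, Xproj, outer_mul_outer, hadVec_inner, if_neg h, zero_smul]

/-- The two bases are mutually unbiased: `|x̄(z)|² = 2^(−N)`. -/
theorem Xproj_Zproj_Xproj (N : ℕ) (x z : Fin N → Bool) :
    Xproj N x * Zproj N z * Xproj N x = (((2 : ℝ) ^ N)⁻¹ : ℝ) • Xproj N x := by
  have hn : (starRingEnd ℂ) (hadVec N x z) * hadVec N x z = ((2 : ℂ) ^ N)⁻¹ := by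
    rw [hadVec, map_div₀, Complex.conj_ofReal, map_pow, map_neg, map_one, div_mul_div_comm,
      sqrt_two_pow_mul_self, ← mul_pow]
    simp
  rw [mul_assoc, Zproj, Xproj, outer_mul_outer, ketVec_inner, Matrix.mul_smul]
  ext i j
  have e : (outer (hadVec N x) * Matrix.vecMulVec (ketVec N z)
      fun j => (starRingEnd ℂ) (hadVec N x j)) i j
      = hadVec N x i * (starRingEnd ℂ) (hadVec N x z) * (starRingEnd ℂ) (hadVec N x j) := by
    simp [outer, Matrix.mul_apply, Matrix.vecMulVec_apply, ketVec]
  rw [Matrix.smul_apply, e, Matrix.smul_apply, outer, Matrix.vecMulVec_apply, Complex.real_smul]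
  push_cast
  rw [← hn, smul_eq_mul]
  ring

theorem isStarProjection_kronecker {m n : Type*} [Fintype m] [Fintype n]
    {A : Matrix m m ℂ} {B : Matrix n n ℂ} (hA : IsStarProjection A) (hB : IsStarProjection B) :
    IsStarProjection (A ⊗ₖ B) := by
  refine ⟨?_, ?_⟩
  · change A ⊗ₖ B * A ⊗ₖ B = A ⊗ₖ B
    rw [← Matrix.mul_kronecker_mul, show A * A = A from hA.isIdempotentElem,
      show B * B = B from hB.isIdempotentElem]
  · change (A ⊗ₖ B)ᴴ = A ⊗ₖ B
    rw [Matrix.conjTranspose_kronecker, show Aᴴ = A from hA.isSelfAdjoint,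
      show Bᴴ = B from hB.isSelfAdjoint]

/-- The positive functional `M ↦ Re tr (Θ M)`. -/
def stateFun {n : Type*} [Fintype n] (Θ : Matrix n n ℂ) : Matrix n n ℂ →ₗ[ℝ] ℝ where
  toFun M := (Matrix.trace (Θ * M)).re
  map_add' A B := by simp [mul_add]
  map_smul' r A := by simp

theorem stateFun_nonneg {n : Type*} [Fintype n] {Θ : Matrix n n ℂ} (hΘ : Θ.PosSemidef)
    (Y : Matrix n n ℂ) : 0 ≤ stateFun Θ (star Y * Y) := by
  change 0 ≤ (Matrix.trace (Θ * (Yᴴ * Y))).re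
  rw [← mul_assoc, Matrix.trace_mul_comm, ← mul_assoc]
  exact (Complex.nonneg_iff.mp (hΘ.mul_mul_conjTranspose_same Y).trace_nonneg).1

/-- A projection has nonnegative weight, being `R^* R`. -/
theorem stateFun_proj_nonneg {n : Type*} [Fintype n] {Θ : Matrix n n ℂ} (hΘ : Θ.PosSemidef)
    {R : Matrix n n ℂ} (hR : IsStarProjection R) : 0 ≤ stateFun Θ R := by
  have := stateFun_nonneg hΘ R
  rwa [show star R = R from hR.isSelfAdjoint, show R * R = R from hR.isIdempotentElem] at this

/-- Sandwiching Bob's decoding projection between Eve's: only the terms with equal outcome on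
Eve's side survive, and the bases are mutually unbiased, so one is left with
`2^(−N) ∑ₓ X_x ⊗ (∑_z E_z) ⊗ F_x`. -/
theorem sandwich (N b e : ℕ) (ℰ 𝓕 : Finset (Fin N → Bool))
    (E : (Fin N → Bool) → Matrix (Fin b) (Fin b) ℂ)
    (F : (Fin N → Bool) → Matrix (Fin e) (Fin e) ℂ)
    (hF : ∀ x ∈ 𝓕, F x * F x = F x)
    (hFo : ∀ x ∈ 𝓕, ∀ x' ∈ 𝓕, x ≠ x' → F x * F x' = 0) :
    (∑ x ∈ 𝓕, (Xproj N x ⊗ₖ (1 : Matrix (Fin b) (Fin b) ℂ)) ⊗ₖ F x) *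
      (∑ z ∈ ℰ, (Zproj N z ⊗ₖ E z) ⊗ₖ (1 : Matrix (Fin e) (Fin e) ℂ)) *
      (∑ x ∈ 𝓕, (Xproj N x ⊗ₖ (1 : Matrix (Fin b) (Fin b) ℂ)) ⊗ₖ F x)
      = (((2 : ℝ) ^ N)⁻¹ : ℝ) • ∑ x ∈ 𝓕, (Xproj N x ⊗ₖ (∑ z ∈ ℰ, E z)) ⊗ₖ F x := by
  have hsum : ∀ x, (Xproj N x ⊗ₖ (∑ z ∈ ℰ, E z)) ⊗ₖ F x
      = ∑ z ∈ ℰ, (Xproj N x ⊗ₖ E z) ⊗ₖ F x := by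
    intro x
    ext i j
    simp [Matrix.sum_apply, Finset.mul_sum, Finset.sum_mul]
  rw [Finset.sum_mul, Finset.sum_mul, Finset.smul_sum]
  refine Finset.sum_congr rfl fun x hx => ?_
  rw [hsum, Finset.smul_sum, Finset.mul_sum ℰ, Finset.sum_mul]
  refine Finset.sum_congr rfl fun z _ => ?_
  rw [Finset.mul_sum, Finset.sum_eq_single_of_mem x hx]
  · simp only [← Matrix.mul_kronecker_mul, one_mul, mul_one, Xproj_Zproj_Xproj, hF x hx,
      Matrix.smul_kronecker]
  · intro x' hx' hne
    simp only [← Matrix.mul_kronecker_mul, mul_one, hFo x hx x' hx' hne.symm,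
      Matrix.kronecker_zero]

end Concrete

/-! ### The counting bound -/

/-- Abstract information–disturbance counting bound:
if each message `z ∈ 𝓔_t` is decoded correctly with probability `2^(−N)` on Bob's side
and each `x ∈ 𝓕_s` on Eve's side, then
`Σ_t |𝓔_t| + Σ_s |𝓕_s| ≤ 2^N (1 + (2 |T| |S| 2^(−N))^{1/2})`. -/
theorem information_disturbance_counting (N b e : ℕ) (hN : 1 ≤ N)
    {T : Type*} [Fintype T] {S : Type*} [Fintype S]
    (Θ : Matrix (((Fin N → Bool) × Fin b) × Fin e) (((Fin N → Bool) × Fin b) × Fin e) ℂ)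
    (hΘpsd : Θ.PosSemidef) (hΘtr : Θ.trace = 1)
    (𝓔 : T → Finset (Fin N → Bool))
    (hEdisj : ∀ t t', t ≠ t' → Disjoint (𝓔 t) (𝓔 t'))
    (E : T → (Fin N → Bool) → Matrix (Fin b) (Fin b) ℂ)
    (hEproj : ∀ t, ∀ z ∈ 𝓔 t, E t z * E t z = E t z ∧ (E t z)ᴴ = E t z)
    (hEorth : ∀ t, ∀ z ∈ 𝓔 t, ∀ z' ∈ 𝓔 t, z ≠ z' → E t z * E t z' = 0)
    (𝓕 : S → Finset (Fin N → Bool))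
    (hFdisj : ∀ s s', s ≠ s' → Disjoint (𝓕 s) (𝓕 s'))
    (F : S → (Fin N → Bool) → Matrix (Fin e) (Fin e) ℂ)
    (hFproj : ∀ s, ∀ x ∈ 𝓕 s, F s x * F s x = F s x ∧ (F s x)ᴴ = F s x)
    (hForth : ∀ s, ∀ x ∈ 𝓕 s, ∀ x' ∈ 𝓕 s, x ≠ x' → F s x * F s x' = 0)
    (hBob : ∀ t, ∀ z ∈ 𝓔 t,
      Matrix.trace (Θ * ((Zproj N z ⊗ₖ E t z) ⊗ₖ (1 : Matrix (Fin e) (Fin e) ℂ))) =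
        ((2 : ℂ) ^ N)⁻¹)
    (hEve : ∀ s, ∀ x ∈ 𝓕 s,
      Matrix.trace (Θ * ((Xproj N x ⊗ₖ (1 : Matrix (Fin b) (Fin b) ℂ)) ⊗ₖ F s x)) =
        ((2 : ℂ) ^ N)⁻¹) :
    (∑ t, ((𝓔 t).card : ℝ)) + ∑ s, ((𝓕 s).card : ℝ) ≤
      (2 : ℝ) ^ N *
        (1 + Real.sqrt (2 * (Fintype.card T) * (Fintype.card S) * ((2 : ℝ) ^ N)⁻¹)) := by
  classical
  set P : T → Matrix (((Fin N → Bool) × Fin b) × Fin e) (((Fin N → Bool) × Fin b) × Fin e) ℂ :=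
    fun t => ∑ z ∈ 𝓔 t, (Zproj N z ⊗ₖ E t z) ⊗ₖ (1 : Matrix (Fin e) (Fin e) ℂ) with hPdef
  set Q : S → Matrix (((Fin N → Bool) × Fin b) × Fin e) (((Fin N → Bool) × Fin b) × Fin e) ℂ :=
    fun s => ∑ x ∈ 𝓕 s, (Xproj N x ⊗ₖ (1 : Matrix (Fin b) (Fin b) ℂ)) ⊗ₖ F s x with hQdef
  have hE : ∀ t, ∀ z ∈ 𝓔 t, IsStarProjection (E t z) := fun t z hz =>
    ⟨(hEproj t z hz).1, (hEproj t z hz).2⟩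
  have hF : ∀ s, ∀ x ∈ 𝓕 s, IsStarProjection (F s x) := fun s x hx =>
    ⟨(hFproj s x hx).1, (hFproj s x hx).2⟩
  have hZo : ∀ (t t' : T) (z z' : Fin N → Bool), z ≠ z' →
      ((Zproj N z ⊗ₖ E t z) ⊗ₖ (1 : Matrix (Fin e) (Fin e) ℂ)) *
        ((Zproj N z' ⊗ₖ E t' z') ⊗ₖ (1 : Matrix (Fin e) (Fin e) ℂ)) = 0 := by
    intro t t' z z' h
    simp only [← Matrix.mul_kronecker_mul, Zproj_mul_of_ne N h, Matrix.zero_kronecker]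
  have hXo : ∀ (s s' : S) (x x' : Fin N → Bool), x ≠ x' →
      ((Xproj N x ⊗ₖ (1 : Matrix (Fin b) (Fin b) ℂ)) ⊗ₖ F s x) *
        ((Xproj N x' ⊗ₖ (1 : Matrix (Fin b) (Fin b) ℂ)) ⊗ₖ F s' x') = 0 := by
    intro s s' x x' h
    simp only [← Matrix.mul_kronecker_mul, Xproj_mul_of_ne N h, Matrix.zero_kronecker]
  have hP : ∀ t, IsStarProjection (P t) := fun t =>
    isStarProjection_sum _ _ (fun z hz => isStarProjection_kronecker
      (isStarProjection_kronecker (Zproj_isStarProjection N z) (hE t z hz)) (.one _))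
      fun z _ z' _ h => hZo t t z z' h
  have hQ : ∀ s, IsStarProjection (Q s) := fun s =>
    isStarProjection_sum _ _ (fun x hx => isStarProjection_kronecker
      (isStarProjection_kronecker (Xproj_isStarProjection N x) (.one _)) (hF s x hx))
      fun x _ x' _ h => hXo s s x x' h
  have hPo : ∀ t t', t ≠ t' → P t * P t' = 0 := by
    intro t t' h
    simp only [hPdef, Finset.sum_mul, Finset.mul_sum]
    exact Finset.sum_eq_zero fun z' hz' => Finset.sum_eq_zero fun z hz => hZo _ _ _ _ <| by
      rintro rfl
      exact Finset.disjoint_left.mp (hEdisj t t' h) hz hz'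
  have hQo : ∀ s s', s ≠ s' → Q s * Q s' = 0 := by
    intro s s' h
    simp only [hQdef, Finset.sum_mul, Finset.mul_sum]
    exact Finset.sum_eq_zero fun x' hx' => Finset.sum_eq_zero fun x hx => hXo _ _ _ _ <| by
      rintro rfl
      exact Finset.disjoint_left.mp (hFdisj s s' h) hx hx'
  have hpair : ∀ t s, stateFun Θ (Q s * P t * Q s) ≤ ((2 : ℝ) ^ N)⁻¹ * stateFun Θ (Q s) := by
    intro t s
    rw [hPdef, hQdef, sandwich N b e (𝓔 t) (𝓕 s) (E t) (F s) (fun x hx => (hFproj s x hx).1)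
      (hForth s), map_smul, smul_eq_mul]
    refine mul_le_mul_of_nonneg_left ?_ (by positivity)
    rw [map_sum, map_sum]
    refine Finset.sum_le_sum fun x hx => ?_
    have hG := isStarProjection_sum (𝓔 t) (E t) (hE t) (hEorth t)
    -- `X_x ⊗ I ⊗ F_x - X_x ⊗ G ⊗ F_x = X_x ⊗ (I - G) ⊗ F_x` is a projection.
    have hpos := stateFun_proj_nonneg hΘpsd (isStarProjection_kronecker
      (isStarProjection_kronecker (Xproj_isStarProjection N x) hG.one_sub) (hF s x hx))
    have hsplit : (Xproj N x ⊗ₖ (1 : Matrix (Fin b) (Fin b) ℂ)) ⊗ₖ F s x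
        = (Xproj N x ⊗ₖ (∑ z ∈ 𝓔 t, E t z)) ⊗ₖ F s x
          + (Xproj N x ⊗ₖ (1 - ∑ z ∈ 𝓔 t, E t z)) ⊗ₖ F s x := by
      rw [← Matrix.add_kronecker, ← Matrix.kronecker_add, add_sub_cancel]
    rw [hsplit, map_add]
    linarith
  have h1 : stateFun Θ 1 = 1 := by
    change (Matrix.trace (Θ * 1)).re = 1
    rw [mul_one, hΘtr, Complex.one_re]
  have hre : (((2 : ℂ) ^ N)⁻¹).re = ((2 : ℝ) ^ N)⁻¹ := by
    rw [← Complex.ofReal_re ((2 : ℝ) ^ N)⁻¹]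
    push_cast
    rfl
  have hPv : ∀ t, stateFun Θ (P t) = (𝓔 t).card * ((2 : ℝ) ^ N)⁻¹ := by
    intro t
    rw [hPdef, map_sum, ← nsmul_eq_mul]
    exact Finset.sum_eq_card_nsmul fun z hz => (congrArg Complex.re (hBob t z hz)).trans hre
  have hQv : ∀ s, stateFun Θ (Q s) = (𝓕 s).card * ((2 : ℝ) ^ N)⁻¹ := by
    intro s
    rw [hQdef, map_sum, ← nsmul_eq_mul]
    exact Finset.sum_eq_card_nsmul fun x hx => (congrArg Complex.re (hEve s x hx)).trans hre
  have hmain := state_sum_add_sum_le (stateFun Θ) (stateFun_nonneg hΘpsd) h1 P Q hP hQ hPo hQo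
    (d := ((2 : ℝ) ^ N)⁻¹) (by positivity) hpair
  simp only [hPv, hQv, ← Finset.sum_mul] at hmain
  rw [← add_mul, ← div_eq_mul_inv, div_le_iff₀' (by positivity)] at hmain
  refine hmain.trans (mul_le_mul_of_nonneg_left (add_le_add_right (Real.sqrt_le_sqrt ?_) 1)
    (by positivity))
  have : (0 : ℝ) ≤ Fintype.card T * Fintype.card S * ((2 : ℝ) ^ N)⁻¹ := by positivity
  linarith
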